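/- arXiv:2401.04895 — 4 statements merged into one kernel-verified Lean document; each statement's English description precedes it below -/
import Mathlib

section
/- Fix an integer n ≥ 1. Let Ω ∈ τ_s(ℍ_s^n) be self-stem-preserving. Then (𝒮ℛ(Ω), +, *) is an associative unitary real algebra; explicitly, for all f, g, h ∈ 𝒮ℛ(Ω) and a ∈ ℝ: (i) f + g ∈ 𝒮ℛ(Ω) and f*g ∈ 𝒮ℛ(Ω); (ii) (f*g)*h = f*(g*h); (iii) the constant function 1 satisfies 1*f = f*1 = f; (iv) f*(g + h) = f*g + f*h and (f + g)*h = f*h + g*h; (v) (a·f)*g = a·(f*g) = f*(a·g). -/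
open scoped ENNReal NNReal

noncomputable section

/-- The real quaternions. -/
abbrev ℍ := Quaternion ℝ

/-- The set `𝕊` of imaginary units of the quaternions. -/
def QS : Set ℍ := {I | I ^ 2 = -1}

/-- `Ψ_i^I : ℂ^n → ℂ_I^n ⊆ ℍ^n`, sending `x + y i` to `x + y I` componentwise. -/
def PsiI (n : ℕ) (I : ℍ) (z : Fin n → ℂ) : Fin n → ℍ :=
  fun ℓ => algebraMap ℝ ℍ (z ℓ).re + (z ℓ).im • I

/-- The slice `ℂ_I^n = (ℝ + ℝ I)^n ⊆ ℍ^n`. -/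
def sliceCn (n : ℕ) (I : ℍ) : Set (Fin n → ℍ) := Set.range (PsiI n I)

/-- The weakly slice cone `ℍ_s^n = ⋃_{I ∈ 𝕊} ℂ_I^n`. -/
def weakSliceCone (n : ℕ) : Set (Fin n → ℍ) := ⋃ I ∈ QS, sliceCn n I

/-- `Ω` is slice open (i.e. `Ω ∈ τ_s(ℍ_s^n)`): `Ω ⊆ ℍ_s^n` and each slice
`Ω_I = Ω ∩ ℂ_I^n` is open in `ℂ_I^n`, encoded via the homeomorphism `Ψ_i^I`. -/
def sliceOpen (n : ℕ) (Ω : Set (Fin n → ℍ)) : Prop :=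
  Ω ⊆ weakSliceCone n ∧ ∀ I ∈ QS, IsOpen (PsiI n I ⁻¹' Ω)

/-- The set `𝒫(ℂ^n)` of continuous paths `[0,1] → ℂ^n` with real start point,
encoded as functions `ℝ → ℂ^n` continuous on `[0,1]`. -/
def PathsC (n : ℕ) : Set (ℝ → Fin n → ℂ) :=
  {γ | ContinuousOn γ (Set.Icc 0 1) ∧ ∀ ℓ, (γ 0 ℓ).im = 0}

/-- `γ^I([0,1]) ⊆ Ω`. -/
def pathInSlice (n : ℕ) (Ω : Set (Fin n → ℍ)) (I : ℍ) (γ : ℝ → Fin n → ℂ) : Prop :=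
  ∀ t ∈ Set.Icc (0 : ℝ) 1, PsiI n I (γ t) ∈ Ω

/-- The set `𝕊(Ω, γ) = {I ∈ 𝕊 : γ^I ⊆ Ω}`. -/
def sliceUnits (n : ℕ) (Ω : Set (Fin n → ℍ)) (γ : ℝ → Fin n → ℂ) : Set ℍ :=
  {I | I ∈ QS ∧ pathInSlice n Ω I γ}

/-- The set `𝒫(ℂ^n, Ω)`. -/
def PathsIn (n : ℕ) (Ω : Set (Fin n → ℍ)) : Set (ℝ → Fin n → ℂ) :=
  {γ | γ ∈ PathsC n ∧ ∃ I, I ∈ sliceUnits n Ω γ}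

/-- The straight segment `𝓛_z^w(t) = (1 - t)z + tw`. -/
def segPath (n : ℕ) (z w : Fin n → ℂ) : ℝ → Fin n → ℂ :=
  fun t => (1 - t) • z + t • w

/-- Concatenation of paths. -/
def concatP (n : ℕ) (γ δ : ℝ → Fin n → ℂ) : ℝ → Fin n → ℂ :=
  fun t => if t ≤ 1 / 2 then γ (2 * t) else δ (2 * t - 1)

/-- `𝓛_γ(z) := γ ∘ 𝓛_{γ(1)}^z`, the extension of `γ` by the segment from `γ(1)` to `z`. -/
def extendPath (n : ℕ) (γ : ℝ → Fin n → ℂ) (z : Fin n → ℂ) : ℝ → Fin n → ℂ :=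
  concatP n γ (segPath n (γ 1) z)

/-- The ball `B_{𝒫(ℂ^n)}(γ, r)` in path space. -/
def pathBall (n : ℕ) (γ : ℝ → Fin n → ℂ) (r : ℝ) : Set (ℝ → Fin n → ℂ) :=
  {β | ∃ z ∈ Metric.ball (γ 1) r, β = extendPath n γ z}

/-- `B_I(c^I, r) ⊆ Ω_I`, encoded via `Ψ_i^I`. -/
def ballInSlice (n : ℕ) (Ω : Set (Fin n → ℍ)) (I : ℍ) (c : Fin n → ℂ) (r : ℝ) : Prop :=
  ∀ w ∈ Metric.ball c r, PsiI n I w ∈ Ω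

/-- `r_{γ,Ω}`, as an extended nonnegative real. -/
def rPath (n : ℕ) (Ω : Set (Fin n → ℍ)) (γ : ℝ → Fin n → ℂ) : ℝ≥0∞ :=
  sSup {x : ℝ≥0∞ | ∃ r : ℝ≥0, x = r ∧ pathBall n γ r ⊆ PathsIn n Ω}

/-- `r^{𝕊'}_{γ,Ω}`, as an extended nonnegative real. -/
def rSliceSet (n : ℕ) (Ω : Set (Fin n → ℍ)) (γ : ℝ → Fin n → ℂ) (S' : Set ℍ) : ℝ≥0∞ :=
  sSup {x : ℝ≥0∞ | ∃ r : ℝ≥0, x = r ∧ ∀ I ∈ S', ballInSlice n Ω I (γ 1) r}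

/-- `r²_{γ,Ω}`, as an extended nonnegative real. -/
def r2Slice (n : ℕ) (Ω : Set (Fin n → ℍ)) (γ : ℝ → Fin n → ℂ) : ℝ≥0∞ :=
  sSup {x : ℝ≥0∞ | ∃ S'' : Set ℍ, S'' ⊆ sliceUnits n Ω γ ∧ S''.Nontrivial ∧ x = rSliceSet n Ω γ S''}

/-- `r^I_{γ,Ω}`, as an extended nonnegative real. -/
def rISlice (n : ℕ) (Ω : Set (Fin n → ℍ)) (γ : ℝ → Fin n → ℂ) (I : ℍ) : ℝ≥0∞ :=
  sSup {x : ℝ≥0∞ | ∃ r : ℝ≥0, x = r ∧ ballInSlice n Ω I (γ 1) r}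

/-- `Ω` is real-path-connected. -/
def realPathConnected (n : ℕ) (Ω : Set (Fin n → ℍ)) : Prop :=
  ∀ q ∈ Ω, ∃ γ ∈ PathsIn n Ω, ∃ I ∈ sliceUnits n Ω γ, PsiI n I (γ 1) = q

/-- `Ω₂` is `Ω₁`-stem-preserving. -/
def stemPreserving (n : ℕ) (Ω₁ Ω₂ : Set (Fin n → ℍ)) : Prop :=
  (∀ γ ∈ PathsIn n Ω₁, (sliceUnits n Ω₂ γ).Nontrivial) ∧
  (∀ α ∈ PathsIn n Ω₁, ∀ β ∈ PathsIn n Ω₁, α 1 = β 1 →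
    ¬ ∃ I, sliceUnits n Ω₂ α ∩ sliceUnits n Ω₂ β = {I})

/-- `F : 𝒫(ℂ^n, Ω) → ℍ^{2×1}` is a (path-slice) stem function of `f`:
`f(γ^I(1)) = (1, I)·F(γ)`. -/
def isStemOf (n : ℕ) (Ω : Set (Fin n → ℍ)) (f : (Fin n → ℍ) → ℍ)
    (F : (ℝ → Fin n → ℂ) → ℍ × ℍ) : Prop :=
  ∀ γ ∈ PathsIn n Ω, ∀ I ∈ sliceUnits n Ω γ, f (PsiI n I (γ 1)) = (F γ).1 + I * (F γ).2

/-- `f` is a path-slice function on `Ω`. -/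
def PathSliceFn (n : ℕ) (Ω : Set (Fin n → ℍ)) (f : (Fin n → ℍ) → ℍ) : Prop :=
  ∃ F, isStemOf n Ω f F

/-- `f` is (weakly) slice regular on `Ω`: each restriction `f_I` is real differentiable
and satisfies the Cauchy-Riemann equations `(∂/∂x_ℓ + I ∂/∂y_ℓ) f_I = 0`. -/
def SliceRegular (n : ℕ) (Ω : Set (Fin n → ℍ)) (f : (Fin n → ℍ) → ℍ) : Prop :=
  ∀ I ∈ QS,
    DifferentiableOn ℝ (fun z => f (PsiI n I z)) (PsiI n I ⁻¹' Ω) ∧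
    ∀ z ∈ PsiI n I ⁻¹' Ω, ∀ ℓ : Fin n,
      fderivWithin ℝ (fun z => f (PsiI n I z)) (PsiI n I ⁻¹' Ω) z (Pi.single ℓ 1)
        + I * fderivWithin ℝ (fun z => f (PsiI n I z)) (PsiI n I ⁻¹' Ω) z
            (Pi.single ℓ Complex.I) = 0

open Classical in
/-- `F_{Ω₁}^f` : a choice of stem function of the path-slice function `f : Ω₂ → ℍ`
(its restriction to `𝒫(ℂ^n, Ω₁)` is independent of the choice). -/
def stemF (n : ℕ) (Ω₂ : Set (Fin n → ℍ)) (f : (Fin n → ℍ) → ℍ) :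
    (ℝ → Fin n → ℂ) → ℍ × ℍ :=
  if h : ∃ F, isStemOf n Ω₂ f F then h.choose else fun _ => 0

open Classical in
/-- The map `ℑ : ℍ_s^n → 𝕊 ∪ {0}`. -/
def scrI {n : ℕ} (q : Fin n → ℍ) : ℍ :=
  if h : (Finset.univ.filter fun ℓ : Fin n => Quaternion.im (q ℓ) ≠ 0).Nonempty then
    ‖Quaternion.im (q ((Finset.univ.filter
        fun ℓ : Fin n => Quaternion.im (q ℓ) ≠ 0).min' h))‖⁻¹ •
      Quaternion.im (q ((Finset.univ.filter
        fun ℓ : Fin n => Quaternion.im (q ℓ) ≠ 0).min' h))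
  else 0

open Classical in
/-- The map `ℱ_{Ω₁}^g : Ω₁ → ℍ^{2×1}`. -/
def scrF (n : ℕ) (Ω₁ Ω₂ : Set (Fin n → ℍ)) (g : (Fin n → ℍ) → ℍ) (q : Fin n → ℍ) :
    ℍ × ℍ :=
  if h : (∃ ℓ, Quaternion.im (q ℓ) ≠ 0) ∧
      ∃ γ, γ ∈ PathsIn n Ω₁ ∧ pathInSlice n Ω₁ (scrI q) γ ∧ PsiI n (scrI q) (γ 1) = q then
    stemF n Ω₂ g h.2.choose
  else (g q, 0)

/-- The `*`-product `(f*g)(q) = (f(q), ℑ(q)f(q))·ℱ_{Ω₁}^g(q)`. -/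
def starProd (n : ℕ) (Ω₁ Ω₂ : Set (Fin n → ℍ)) (f g : (Fin n → ℍ) → ℍ) :
    (Fin n → ℍ) → ℍ :=
  fun q => f q * (scrF n Ω₁ Ω₂ g q).1 + scrI q * f q * (scrF n Ω₁ Ω₂ g q).2

/-- Componentwise complex conjugate of a path. -/
def conjPath (n : ℕ) (γ : ℝ → Fin n → ℂ) : ℝ → Fin n → ℂ :=
  fun t ℓ => starRingEnd ℂ (γ t ℓ)

end

/-! ### Holomorphy with respect to left multiplication by an imaginary unit -/

/-- `u` is real differentiable at `z` and satisfies the `I`-Cauchy-Riemann equations there. -/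
def CRAt {V : Type} [NormedAddCommGroup V] [NormedSpace ℂ V] (I : ℍ) (u : V → ℍ) (z : V) : Prop :=
  ∃ L : V →L[ℝ] ℍ, HasFDerivAt u L z ∧ ∀ v, L v + I * L (Complex.I • v) = 0

lemma QS_mul_self {I : ℍ} (hI : I ∈ QS) : I * I = -1 := by
  have h : I ^ 2 = -1 := hI
  rwa [pow_two] at h

lemma QS_norm {I : ℍ} (hI : I ∈ QS) : ‖I‖ = 1 := by
  have h := congrArg norm (QS_mul_self hI)
  rw [norm_mul, norm_neg, norm_one] at h
  nlinarith [norm_nonneg I]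

lemma QS_re {I : ℍ} (hI : I ∈ QS) : I.re = 0 := by
  have h := QS_mul_self hI
  have h0 := congrArg QuaternionAlgebra.re h
  have h1 := congrArg QuaternionAlgebra.imI h
  have h2 := congrArg QuaternionAlgebra.imJ h
  have h3 := congrArg QuaternionAlgebra.imK h
  have o0 : (1 : ℍ).re = 1 := rfl
  have o1 : (1 : ℍ).imI = 0 := rfl
  have o2 : (1 : ℍ).imJ = 0 := rfl
  have o3 : (1 : ℍ).imK = 0 := rfl
  simp [o0, o1, o2, o3] at h0 h1 h2 h3
  have e1 : I.re * I.imI = 0 := by linarith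
  have e2 : I.re * I.imJ = 0 := by linarith
  have e3 : I.re * I.imK = 0 := by linarith
  by_contra hr
  have e1 := (mul_eq_zero.1 e1).resolve_left hr
  have e2 := (mul_eq_zero.1 e2).resolve_left hr
  have e3 := (mul_eq_zero.1 e3).resolve_left hr
  rw [e1, e2, e3] at h0
  nlinarith

lemma QS_neg {I : ℍ} (hI : I ∈ QS) : -I ∈ QS := by
  have h : I ^ 2 = -1 := hI
  show (-I) ^ 2 = -1
  simpa using h

/-- One-variable identity theorem. -/
lemma ident_one {I : ℍ} (hI : I ∈ QS) {U : Set ℂ} (hU : IsOpen U) (hc : IsPreconnected U)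
    {u : ℂ → ℍ} (hu : ∀ z ∈ U, CRAt I u z) {z₀ : ℂ} (h0 : z₀ ∈ U)
    (hz : ∃ᶠ z in nhdsWithin z₀ {z₀}ᶜ, u z = 0) : ∀ z ∈ U, u z = 0 := by
  have hII := QS_mul_self hI
  let φ : ℂ →ₐ[ℝ] ℍ := Complex.liftAux I hII
  have hφ : ∀ c, φ c = (c.re : ℝ) • (1 : ℍ) + c.im • I := by
    intro c
    simp [φ, Complex.liftAux_apply, Algebra.algebraMap_eq_smul_one]
  have hφn : ∀ c, ‖φ c‖ ≤ ‖c‖ := by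
    intro c
    have h1 : ‖φ c‖ * ‖φ c‖ = ‖c‖ * ‖c‖ := by
      rw [← Quaternion.normSq_eq_norm_mul_self, hφ, Complex.norm_mul_self_eq_normSq,
        Complex.normSq_apply]
      have h2 : ‖I‖ * ‖I‖ = 1 := by rw [QS_norm hI]; norm_num
      rw [← Quaternion.normSq_eq_norm_mul_self, Quaternion.normSq_def'] at h2
      rw [Quaternion.normSq_def']
      have := QS_re hI
      have o0 : (1 : ℍ).re = 1 := rfl
      have o1 : (1 : ℍ).imI = 0 := rfl
      have o2 : (1 : ℍ).imJ = 0 := rfl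
      have o3 : (1 : ℍ).imK = 0 := rfl
      simp [this, o0, o1, o2, o3] at h2 ⊢
      linear_combination c.im ^ 2 * h2
    nlinarith [norm_nonneg c, norm_nonneg (φ c)]
  let _ : Module ℂ ℍ := Module.compHom ℍ φ.toRingHom
  have hs : ∀ (c : ℂ) (q : ℍ), c • q = φ c * q := fun c q => rfl
  let _ : NormedSpace ℂ ℍ := ⟨fun c q => by
      rw [hs, norm_mul]
      exact mul_le_mul_of_nonneg_right (hφn c) (norm_nonneg q)⟩
  have _ : IsScalarTower ℝ ℂ ℍ := ⟨fun r c q => by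
    rw [hs, hs, map_smul, smul_mul_assoc]⟩
  have hd : DifferentiableOn ℂ u U := by
    intro z hzU
    obtain ⟨L, hL, hCR⟩ := hu z hzU
    have hCR' : ∀ v, L (Complex.I • v) = I * L v := by
      intro v
      have h1 := hCR v
      have h2 : I * L v + I * I * L (Complex.I • v) = 0 := by
        rw [mul_assoc, ← mul_add, h1, mul_zero]
      rw [hII] at h2
      have : I * L v - L (Complex.I • v) = 0 := by
        rw [← h2]; noncomm_ring
      exact (sub_eq_zero.1 this).symm
    let L' : ℂ →L[ℂ] ℍ := ContinuousLinearMap.toSpanSingleton ℂ (L 1)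
    have : HasFDerivAt u L' z := by
      refine hasFDerivAt_of_restrictScalars ℝ hL ?_
      apply ContinuousLinearMap.ext
      intro c
      have h1 : c = c.re • (1 : ℂ) + c.im • (Complex.I • (1 : ℂ)) := by
        apply Complex.ext <;> simp
      show c • L 1 = L c
      conv_rhs => rw [h1, map_add, map_smul, map_smul, hCR']
      rw [hs, hφ, add_mul, smul_mul_assoc, smul_mul_assoc, one_mul]
    exact this.differentiableAt.differentiableWithinAt
  exact (hd.analyticOnNhd hU).eqOn_zero_of_preconnected_of_frequently_eq_zero hc h0 hz

/-- Restriction of a CR function to a complex affine line. -/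
lemma CRAt.line {n : ℕ} {I : ℍ} {u : (Fin n → ℂ) → ℍ} (a b : Fin n → ℂ) (t : ℂ)
    (h : CRAt I u (a + t • b)) : CRAt I (fun s : ℂ => u (a + s • b)) t := by
  obtain ⟨L, hL, hCR⟩ := h
  let T : ℂ →L[ℝ] (Fin n → ℂ) := (ContinuousLinearMap.toSpanSingleton ℂ b).restrictScalars ℝ
  have hT : HasFDerivAt (fun s : ℂ => a + s • b) T t :=
    (T.hasFDerivAt (x := t)).const_add a
  refine ⟨L.comp T, hL.comp t hT, fun v => ?_⟩
  have := hCR (v • b)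
  simpa [T, mul_smul] using this

lemma convex_line {n : ℕ} (a b c : Fin n → ℂ) (r : ℝ) :
    Convex ℝ {t : ℂ | a + t • b ∈ Metric.ball c r} := by
  intro s hs t ht p q hp hq hpq
  have := convex_ball c r hs ht hp hq hpq
  simp only [Set.mem_ofPred_eq] at this ⊢
  convert this using 1
  have e : a = p • a + q • a := by rw [← add_smul, hpq, one_smul]
  conv_lhs => rw [e]
  simp only [add_smul, smul_add, smul_assoc]
  abel

lemma open_line {n : ℕ} (a b c : Fin n → ℂ) (r : ℝ) :
    IsOpen {t : ℂ | a + t • b ∈ Metric.ball c r} :=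
  Metric.isOpen_ball.preimage (by fun_prop)

/-- Identity theorem along a path starting at a real point. -/
lemma ident_path {n : ℕ} {I : ℍ} (hI : I ∈ QS) {W : Set (Fin n → ℂ)} (hW : IsOpen W)
    {D : (Fin n → ℂ) → ℍ} (hD : ∀ z ∈ W, CRAt I D z)
    (hreal : ∀ z ∈ W, (∀ ℓ, (z ℓ).im = 0) → D z = 0)
    {γ : ℝ → Fin n → ℂ} (hγ : γ ∈ PathsC n) (hγW : ∀ t ∈ Set.Icc (0 : ℝ) 1, γ t ∈ W) :
    D (γ 1) = 0 := by
  let V : Set (Fin n → ℂ) := {z | ∀ᶠ w in nhds z, D w = 0}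
  have hV : IsOpen V := isOpen_setOfPred_eventually_nhds
  have h01 : (0 : ℝ) ∈ Set.Icc (0 : ℝ) 1 := by simp
  have h11 : (1 : ℝ) ∈ Set.Icc (0 : ℝ) 1 := by simp
  have h0 : γ 0 ∈ V := by
    obtain ⟨r, hr, hball⟩ := Metric.isOpen_iff.1 hW _ (hγW 0 h01)
    refine Filter.eventually_of_mem (Metric.ball_mem_nhds _ hr) fun w hw => ?_
    let x : Fin n → ℂ := fun ℓ => ((w ℓ).re : ℂ)
    let y : Fin n → ℂ := fun ℓ => ((w ℓ).im : ℂ)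
    have hwxy : w = x + Complex.I • y := by
      ext ℓ
      simp only [x, y, Pi.add_apply, Pi.smul_apply, smul_eq_mul]
      rw [mul_comm]; exact (Complex.re_add_im _).symm
    have hx : x ∈ Metric.ball (γ 0) r := by
      rw [Metric.mem_ball, dist_pi_lt_iff hr] at hw ⊢
      intro ℓ
      refine lt_of_le_of_lt ?_ (hw ℓ)
      rw [Complex.dist_eq, Complex.dist_eq]
      have : x ℓ - γ 0 ℓ = (((w ℓ - γ 0 ℓ).re : ℝ) : ℂ) := by
        apply Complex.ext <;> simp [x, hγ.2 ℓ]
      rw [this, Complex.norm_real]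
      exact Complex.abs_re_le_norm _
    have hz0 : (0 : ℂ) ∈ {t : ℂ | x + t • y ∈ Metric.ball (γ 0) r} := by simpa using hx
    have key := ident_one hI (open_line x y (γ 0) r) (convex_line x y (γ 0) r).isPreconnected
      (u := fun s => D (x + s • y)) (fun z hz => CRAt.line x y z (hD _ (hball hz))) hz0 ?_
      Complex.I (by show x + Complex.I • y ∈ Metric.ball (γ 0) r; rwa [← hwxy])
    · rw [hwxy]; exact key
    · have hopen := (open_line x y (γ 0) r).mem_nhds hz0
      have ht : Filter.Tendsto (fun s : ℝ => (s : ℂ)) (nhdsWithin 0 {0}ᶜ)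
          (nhdsWithin (0 : ℂ) {0}ᶜ) := by
        refine tendsto_nhdsWithin_iff.2 ⟨?_, ?_⟩
        · have : Filter.Tendsto (fun s : ℝ => (s : ℂ)) (nhds 0) (nhds ((0 : ℝ) : ℂ)) :=
            Complex.continuous_ofReal.continuousAt
          simpa using this.mono_left nhdsWithin_le_nhds
        · filter_upwards [self_mem_nhdsWithin] with s hs
          simpa using hs
      refine ht.frequently ?_
      apply Filter.Eventually.frequently
      have h2 := ht.eventually (nhdsWithin_le_nhds hopen)
      filter_upwards [h2] with s hs
      refine hreal _ (hball hs) fun ℓ => ?_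
      simp [x, y]
  have hsub : γ '' Set.Icc 0 1 ⊆ V := by
    have hpre : IsPreconnected (γ '' Set.Icc (0 : ℝ) 1) := isPreconnected_Icc.image _ hγ.1
    refine hpre.subset_of_closure_inter_subset hV ⟨γ 0, ⟨0, h01, rfl⟩, h0⟩ ?_
    rintro z ⟨hzc, t, ht, rfl⟩
    obtain ⟨r, hr, hball⟩ := Metric.isOpen_iff.1 hW _ (hγW t ht)
    obtain ⟨v, hv, hvV⟩ := mem_closure_iff.1 hzc _ Metric.isOpen_ball (Metric.mem_ball_self hr)
    refine Filter.eventually_of_mem (Metric.ball_mem_nhds _ hr) fun w hw => ?_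
    have hz0 : (0 : ℂ) ∈ {s : ℂ | v + s • (w - v) ∈ Metric.ball (γ t) r} := by simpa using hv
    have key := ident_one hI (open_line v (w - v) (γ t) r)
      (convex_line v (w - v) (γ t) r).isPreconnected
      (u := fun s => D (v + s • (w - v)))
      (fun z hz => CRAt.line v (w - v) z (hD _ (hball hz))) hz0 ?_
      1 (by show v + (1 : ℂ) • (w - v) ∈ Metric.ball (γ t) r; simpa using hw)
    · simpa using key
    · apply Filter.Eventually.frequently
      apply nhdsWithin_le_nhds
      have hcont : Filter.Tendsto (fun s : ℂ => v + s • (w - v)) (nhds 0) (nhds v) := by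
        have : Continuous (fun s : ℂ => v + s • (w - v)) := by fun_prop
        simpa using this.tendsto 0
      exact hcont.eventually hvV
  have : γ 1 ∈ V := hsub ⟨1, h11, rfl⟩
  exact this.self_of_nhds

/-! ### Reformulation of slice regularity -/

lemma clm_decomp {n : ℕ} (L : (Fin n → ℂ) →L[ℝ] ℍ) (v : Fin n → ℂ) :
    L v = ∑ ℓ, ((v ℓ).re • L (Pi.single ℓ 1) + (v ℓ).im • L (Pi.single ℓ Complex.I)) := by
  have h : v = ∑ ℓ, ((v ℓ).re • (Pi.single ℓ 1 : Fin n → ℂ)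
      + (v ℓ).im • (Pi.single ℓ Complex.I : Fin n → ℂ)) := by
    conv_lhs => rw [← Finset.univ_sum_single v]
    refine Finset.sum_congr rfl fun ℓ _ => ?_
    rw [← Pi.single_smul, ← Pi.single_smul, ← Pi.single_add]
    congr 1
    apply Complex.ext <;> simp
  conv_lhs => rw [h]
  simp only [map_sum, map_add, map_smul]

lemma cr_of_basis {n : ℕ} {I : ℍ} (hI : I ∈ QS) (L : (Fin n → ℂ) →L[ℝ] ℍ)
    (h : ∀ ℓ : Fin n, L (Pi.single ℓ 1) + I * L (Pi.single ℓ Complex.I) = 0)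
    (v : Fin n → ℂ) : L v + I * L (Complex.I • v) = 0 := by
  rw [clm_decomp L v, clm_decomp L (Complex.I • v), Finset.mul_sum, ← Finset.sum_add_distrib]
  refine Finset.sum_eq_zero fun ℓ _ => ?_
  have h1 : L (Pi.single ℓ 1) = - (I * L (Pi.single ℓ Complex.I)) := eq_neg_of_add_eq_zero_left (h ℓ)
  have h2 := QS_mul_self hI
  rw [h1]
  simp only [Pi.smul_apply, smul_eq_mul, Complex.mul_re, Complex.mul_im, Complex.I_re,
    Complex.I_im, mul_add, mul_smul_comm, mul_neg, ← mul_assoc, h2]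
  simp

lemma SliceRegular.cr {n : ℕ} {Ω : Set (Fin n → ℍ)} (hΩ : sliceOpen n Ω)
    {f : (Fin n → ℍ) → ℍ} (hf : SliceRegular n Ω f) {I : ℍ} (hI : I ∈ QS) {z : Fin n → ℂ}
    (hz : PsiI n I z ∈ Ω) : CRAt I (fun z => f (PsiI n I z)) z := by
  obtain ⟨h1, h2⟩ := hf I hI
  have ho := hΩ.2 I hI
  have hd := (h1 z hz).differentiableAt (ho.mem_nhds hz)
  refine ⟨_, hd.hasFDerivAt, cr_of_basis hI _ fun ℓ => ?_⟩
  have := h2 z hz ℓ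
  rwa [fderivWithin_of_isOpen ho hz] at this

lemma SliceRegular.of_cr {n : ℕ} {Ω : Set (Fin n → ℍ)} (hΩ : sliceOpen n Ω)
    {f : (Fin n → ℍ) → ℍ}
    (h : ∀ I ∈ QS, ∀ z, PsiI n I z ∈ Ω → CRAt I (fun z => f (PsiI n I z)) z) :
    SliceRegular n Ω f := by
  intro I hI
  refine ⟨fun z hz => ?_, fun z hz ℓ => ?_⟩
  · obtain ⟨L, hL, -⟩ := h I hI z hz
    exact hL.differentiableAt.differentiableWithinAt
  · obtain ⟨L, hL, hCR⟩ := h I hI z hz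
    rw [fderivWithin_of_isOpen (hΩ.2 I hI) hz, hL.fderiv]
    have := hCR (Pi.single ℓ 1)
    rwa [← Pi.single_smul, smul_eq_mul, mul_one] at this

/-! ### Pairs of slices -/

lemma solve_pair {J K a b c d : ℍ} (hJK : J ≠ K) (h1 : a + J * b = c + J * d)
    (h2 : a + K * b = c + K * d) : a = c ∧ b = d := by
  have h3 : (J - K) * (b - d) = 0 := by
    have e : (J - K) * (b - d)
      = (a + J * b) - (c + J * d) - ((a + K * b) - (c + K * d)) := by noncomm_ring
    rw [e, h1, h2]; simp
  have h4 : b = d := sub_eq_zero.1 ((mul_eq_zero.1 h3).resolve_left (sub_ne_zero.2 hJK))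
  subst h4
  exact ⟨add_right_cancel h1, rfl⟩

/-- Second stem component computed from two slices. -/
noncomputable def stemTwo (n : ℕ) (g : (Fin n → ℍ) → ℍ) (J K : ℍ) (w : Fin n → ℂ) : ℍ :=
  (J - K)⁻¹ * (g (PsiI n J w) - g (PsiI n K w))

/-- First stem component computed from two slices. -/
noncomputable def stemOne (n : ℕ) (g : (Fin n → ℍ) → ℍ) (J K : ℍ) (w : Fin n → ℂ) : ℍ :=
  g (PsiI n J w) - J * stemTwo n g J K w

lemma stem_left (n : ℕ) (g : (Fin n → ℍ) → ℍ) (J K : ℍ) (w : Fin n → ℂ) :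
    stemOne n g J K w + J * stemTwo n g J K w = g (PsiI n J w) := by
  simp [stemOne]

lemma stem_right (n : ℕ) (g : (Fin n → ℍ) → ℍ) {J K : ℍ} (hJK : J ≠ K) (w : Fin n → ℂ) :
    stemOne n g J K w + K * stemTwo n g J K w = g (PsiI n K w) := by
  have h : (J - K) * stemTwo n g J K w = g (PsiI n J w) - g (PsiI n K w) := by
    rw [stemTwo, mul_inv_cancel_left₀ (sub_ne_zero.2 hJK)]
  rw [stemOne]
  rw [sub_mul] at h
  have : K * stemTwo n g J K w = J * stemTwo n g J K w - (g (PsiI n J w) - g (PsiI n K w)) := by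
    rw [← h]; abel
  rw [this]; abel

lemma stem_pair_deriv {n : ℕ} {Ω : Set (Fin n → ℍ)} (hΩ : sliceOpen n Ω)
    {g : (Fin n → ℍ) → ℍ} (hg : SliceRegular n Ω g) {J K : ℍ} (hJ : J ∈ QS) (hK : K ∈ QS)
    (hJK : J ≠ K) {w : Fin n → ℂ} (hwJ : PsiI n J w ∈ Ω) (hwK : PsiI n K w ∈ Ω) :
    ∃ L1 L2 : (Fin n → ℂ) →L[ℝ] ℍ, HasFDerivAt (stemOne n g J K) L1 w ∧
      HasFDerivAt (stemTwo n g J K) L2 w ∧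
      ∀ v, L1 v - L2 (Complex.I • v) = 0 ∧ L2 v + L1 (Complex.I • v) = 0 := by
  obtain ⟨LJ, hLJ, hJCR⟩ := hg.cr hΩ hJ hwJ
  obtain ⟨LK, hLK, hKCR⟩ := hg.cr hΩ hK hwK
  have hd2 : HasFDerivAt (stemTwo n g J K) ((J - K)⁻¹ • (LJ - LK)) w :=
    (hLJ.sub hLK).const_mul _
  have hd1 : HasFDerivAt (stemOne n g J K) (LJ - J • ((J - K)⁻¹ • (LJ - LK))) w :=
    hLJ.sub (hd2.const_mul J)
  refine ⟨_, _, hd1, hd2, ?_⟩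
  set L2 := (J - K)⁻¹ • (LJ - LK) with hL2
  set L1 := LJ - J • L2 with hL1
  have eJ : ∀ v, LJ v = L1 v + J * L2 v := by
    intro v; simp [hL1]
  have eK : ∀ v, LK v = L1 v + K * L2 v := by
    intro v
    have h : (J - K) * L2 v = LJ v - LK v := by
      rw [hL2]
      show (J - K) * ((J - K)⁻¹ * (LJ v - LK v)) = _
      rw [mul_inv_cancel_left₀ (sub_ne_zero.2 hJK)]
    rw [eJ v, sub_mul] at h
    have : LK v = L1 v + J * L2 v - (J * L2 v - K * L2 v) := by rw [h]; abel
    rw [this]; abel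
  intro v
  have h1 := hJCR v
  have h2 := hKCR v
  rw [eJ, eJ, mul_add, ← mul_assoc, QS_mul_self hJ] at h1
  rw [eK, eK, mul_add, ← mul_assoc, QS_mul_self hK] at h2
  refine solve_pair (c := 0) (d := 0) hJK ?_ ?_
  · rw [mul_zero, add_zero, ← h1]; noncomm_ring
  · rw [mul_zero, add_zero, ← h2]; noncomm_ring

lemma PsiI_real {n : ℕ} {z : Fin n → ℂ} (hz : ∀ ℓ, (z ℓ).im = 0) (I J : ℍ) :
    PsiI n I z = PsiI n J z := by
  ext1 ℓ; simp [PsiI, hz ℓ]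

/-- Every slice regular function has values given by an affine formula at path ends. -/
lemma regular_formula {n : ℕ} {Ω : Set (Fin n → ℍ)} (hΩ : sliceOpen n Ω)
    {g : (Fin n → ℍ) → ℍ} (hg : SliceRegular n Ω g) {γ : ℝ → Fin n → ℂ} (hγ : γ ∈ PathsC n)
    {I J K : ℍ} (hI : I ∈ sliceUnits n Ω γ) (hJ : J ∈ sliceUnits n Ω γ)
    (hK : K ∈ sliceUnits n Ω γ) (hJK : J ≠ K) :
    g (PsiI n I (γ 1)) = stemOne n g J K (γ 1) + I * stemTwo n g J K (γ 1) := by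
  let W : Set (Fin n → ℂ) := (PsiI n I ⁻¹' Ω ∩ PsiI n J ⁻¹' Ω) ∩ PsiI n K ⁻¹' Ω
  have hW : IsOpen W := ((hΩ.2 I hI.1).inter (hΩ.2 J hJ.1)).inter (hΩ.2 K hK.1)
  rw [← sub_eq_zero]
  refine ident_path hI.1 hW
    (D := fun z => g (PsiI n I z) - (stemOne n g J K z + I * stemTwo n g J K z))
    ?_ ?_ hγ (fun t ht => ⟨⟨hI.2 t ht, hJ.2 t ht⟩, hK.2 t ht⟩)
  · rintro z ⟨⟨hzI, hzJ⟩, hzK⟩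
    obtain ⟨L, hL, hCR⟩ := hg.cr hΩ hI.1 hzI
    obtain ⟨L1, L2, h1, h2, hCR2⟩ := stem_pair_deriv hΩ hg hJ.1 hK.1 hJK hzJ hzK
    refine ⟨_, hL.sub (h1.add (h2.const_mul I)), fun v => ?_⟩
    have e0 := hCR v
    obtain ⟨e1, e2⟩ := hCR2 v
    have hII := QS_mul_self hI.1
    show L v - (L1 v + I * L2 v) + I * (L (Complex.I • v)
      - (L1 (Complex.I • v) + I * L2 (Complex.I • v))) = 0
    calc _ = (L v + I * L (Complex.I • v)) - (L1 v + (I * I) * L2 (Complex.I • v))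
          - I * (L2 v + L1 (Complex.I • v)) := by noncomm_ring
      _ = 0 := by
        rw [e0, e2, hII]
        have : L1 v + -1 * L2 (Complex.I • v) = 0 := by rw [← e1]; noncomm_ring
        rw [this]; simp
  · intro z _ hz
    have h2 : stemTwo n g J K z = 0 := by
      simp [stemTwo, PsiI_real hz J K]
    simp only [stemOne, h2]
    rw [PsiI_real hz I J]; simp

lemma regular_pathSlice {n : ℕ} {Ω : Set (Fin n → ℍ)} (hΩ : sliceOpen n Ω)
    (hsp : stemPreserving n Ω Ω) {g : (Fin n → ℍ) → ℍ} (hg : SliceRegular n Ω g) :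
    PathSliceFn n Ω g := by
  have h : ∀ γ : ℝ → Fin n → ℂ, ∃ p : ℍ × ℍ, γ ∈ PathsIn n Ω → ∀ I ∈ sliceUnits n Ω γ,
      g (PsiI n I (γ 1)) = p.1 + I * p.2 := by
    intro γ
    by_cases hγ : γ ∈ PathsIn n Ω
    · obtain ⟨J, hJ, K, hK, hJK⟩ := hsp.1 γ hγ
      exact ⟨(stemOne n g J K (γ 1), stemTwo n g J K (γ 1)), fun _ I hI =>
        regular_formula hΩ hg hγ.1 hI hJ hK hJK⟩
    · exact ⟨0, fun h => absurd h hγ⟩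
  choose F hF using h
  exact ⟨F, fun γ hγ I hI => hF γ hγ I hI⟩

/-! ### Slices, conjugation and path extension -/

lemma PsiI_im {n : ℕ} {I : ℍ} (hI : I ∈ QS) (z : Fin n → ℂ) (ℓ : Fin n) :
    Quaternion.im (PsiI n I z ℓ) = (z ℓ).im • I := by
  have := QS_re hI
  ext <;> simp [PsiI, this, Quaternion.algebraMap_def]

lemma QS_ne_zero {I : ℍ} (hI : I ∈ QS) : I ≠ 0 := by
  intro h
  have := QS_norm hI
  simp [h] at this

lemma PsiI_injective {n : ℕ} {I : ℍ} (hI : I ∈ QS) : Function.Injective (PsiI n I) := by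
  intro z w h
  ext1 ℓ
  have h1 : (z ℓ).im • I = (w ℓ).im • I := by
    rw [← PsiI_im hI, ← PsiI_im hI, h]
  have h2 : (z ℓ).im = (w ℓ).im := smul_left_injective ℝ (QS_ne_zero hI) h1
  have h3 := congrFun h ℓ
  simp only [PsiI, h1] at h3
  have h4 : (z ℓ).re = (w ℓ).re :=
    (algebraMap ℝ ℍ).injective (add_right_cancel h3)
  exact Complex.ext h4 h2

lemma scrI_PsiI {n : ℕ} {I : ℍ} (hI : I ∈ QS) (z : Fin n → ℂ)
    (hq : ∃ ℓ, Quaternion.im (PsiI n I z ℓ) ≠ 0) :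
    scrI (PsiI n I z) = I ∨ scrI (PsiI n I z) = -I := by
  classical
  have hne : (Finset.univ.filter fun ℓ : Fin n =>
      Quaternion.im (PsiI n I z ℓ) ≠ 0).Nonempty := by
    obtain ⟨ℓ, hℓ⟩ := hq
    exact ⟨ℓ, by simpa using hℓ⟩
  have key : ∀ ℓ, Quaternion.im (PsiI n I z ℓ) ≠ 0 →
      ‖Quaternion.im (PsiI n I z ℓ)‖⁻¹ • Quaternion.im (PsiI n I z ℓ) = I ∨
      ‖Quaternion.im (PsiI n I z ℓ)‖⁻¹ • Quaternion.im (PsiI n I z ℓ) = -I := by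
    intro ℓ hℓ
    rw [PsiI_im hI] at hℓ ⊢
    have h0 : (z ℓ).im ≠ 0 := fun h => hℓ (by rw [h, zero_smul])
    rw [norm_smul, QS_norm hI, mul_one, smul_smul, Real.norm_eq_abs]
    rcases lt_or_gt_of_ne h0 with h | h
    · right
      rw [abs_of_neg h, inv_neg, neg_mul, inv_mul_cancel₀ h0, neg_smul, one_smul]
    · left
      rw [abs_of_pos h, inv_mul_cancel₀ h0, one_smul]
  unfold scrI
  rw [dif_pos hne]
  refine key _ ?_
  have hm := Finset.min'_mem _ hne
  rw [Finset.mem_filter] at hm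
  exact hm.2

lemma PsiI_neg_conj {n : ℕ} (I : ℍ) (γ : ℝ → Fin n → ℂ) (t : ℝ) :
    PsiI n (-I) (conjPath n γ t) = PsiI n I (γ t) := by
  ext1 ℓ
  simp [PsiI, conjPath]

lemma conjPath_conjPath {n : ℕ} (γ : ℝ → Fin n → ℂ) : conjPath n (conjPath n γ) = γ := by
  ext t ℓ; simp [conjPath]

lemma conj_mem_PathsC {n : ℕ} {γ : ℝ → Fin n → ℂ} (hγ : γ ∈ PathsC n) :
    conjPath n γ ∈ PathsC n := by
  refine ⟨?_, fun ℓ => by simp [conjPath, hγ.2 ℓ]⟩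
  refine continuousOn_pi.2 fun ℓ => ?_
  exact Complex.continuous_conj.comp_continuousOn (continuousOn_pi.1 hγ.1 ℓ)

lemma neg_mem_sliceUnits {n : ℕ} {Ω : Set (Fin n → ℍ)} {γ : ℝ → Fin n → ℂ} {I : ℍ}
    (hI : I ∈ sliceUnits n Ω γ) : -I ∈ sliceUnits n Ω (conjPath n γ) := by
  refine ⟨QS_neg hI.1, fun t ht => ?_⟩
  rw [PsiI_neg_conj]
  exact hI.2 t ht

lemma conj_mem_PathsIn {n : ℕ} {Ω : Set (Fin n → ℍ)} {γ : ℝ → Fin n → ℂ}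
    (hγ : γ ∈ PathsIn n Ω) : conjPath n γ ∈ PathsIn n Ω := by
  obtain ⟨h1, I, hI⟩ := hγ
  exact ⟨conj_mem_PathsC h1, -I, neg_mem_sliceUnits hI⟩

/-- Extension of a path by a segment. -/
noncomputable def extPath (n : ℕ) (γ : ℝ → Fin n → ℂ) (w : Fin n → ℂ) : ℝ → Fin n → ℂ :=
  fun t => γ (min (2 * t) 1) + (max (2 * t - 1) 0) • (w - γ 1)

lemma extPath_one {n : ℕ} (γ : ℝ → Fin n → ℂ) (w : Fin n → ℂ) : extPath n γ w 1 = w := by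
  have h1 : min ((2 : ℝ) * 1) 1 = 1 := by norm_num
  have h2 : max ((2 : ℝ) * 1 - 1) 0 = 1 := by norm_num
  simp only [extPath, h1, h2, one_smul]
  abel

lemma extPath_mem_PathsC {n : ℕ} {γ : ℝ → Fin n → ℂ} (hγ : γ ∈ PathsC n) (w : Fin n → ℂ) :
    extPath n γ w ∈ PathsC n := by
  constructor
  · refine ContinuousOn.add (hγ.1.comp (by fun_prop) ?_) (by fun_prop)
    intro t ht
    exact ⟨le_min (by linarith [ht.1]) zero_le_one, min_le_right _ _⟩
  · intro ℓ
    have h1 : min ((2 : ℝ) * 0) 1 = 0 := by norm_num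
    have h2 : max ((2 : ℝ) * 0 - 1) 0 = 0 := by norm_num
    simp only [extPath, h1, h2, zero_smul, add_zero]
    exact hγ.2 ℓ

lemma extPath_mem {n : ℕ} {Ω : Set (Fin n → ℍ)} {γ : ℝ → Fin n → ℂ} {I : ℍ}
    (hI : I ∈ sliceUnits n Ω γ) {r : ℝ} (hr : Metric.ball (γ 1) r ⊆ PsiI n I ⁻¹' Ω)
    {w : Fin n → ℂ} (hw : w ∈ Metric.ball (γ 1) r) : I ∈ sliceUnits n Ω (extPath n γ w) := by
  refine ⟨hI.1, fun t ht => ?_⟩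
  rcases le_total (2 * t) 1 with h | h
  · have h1 : min (2 * t) 1 = 2 * t := min_eq_left h
    have h2 : max (2 * t - 1) 0 = 0 := max_eq_right (by linarith)
    simp only [extPath, h1, h2, zero_smul, add_zero]
    exact hI.2 _ ⟨by linarith [ht.1], h⟩
  · have h1 : min (2 * t) 1 = 1 := min_eq_right h
    have h2 : max (2 * t - 1) 0 = 2 * t - 1 := max_eq_left (by linarith)
    simp only [extPath, h1, h2]
    apply hr
    have hc : γ 1 ∈ Metric.ball (γ 1) r :=
      Metric.mem_ball_self (lt_of_le_of_lt dist_nonneg hw)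
    exact (convex_ball (γ 1) r).add_smul_sub_mem hc hw ⟨by linarith, by linarith [ht.2]⟩

/-! ### Stem functions -/

lemma stem_unique {n : ℕ} {Ω : Set (Fin n → ℍ)} (hsp : stemPreserving n Ω Ω)
    {g : (Fin n → ℍ) → ℍ} {G : (ℝ → Fin n → ℂ) → ℍ × ℍ} (hG : isStemOf n Ω g G)
    {γ : ℝ → Fin n → ℂ} (hγ : γ ∈ PathsIn n Ω) {a b : ℍ}
    (h : ∀ I ∈ sliceUnits n Ω γ, g (PsiI n I (γ 1)) = a + I * b) : G γ = (a, b) := by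
  obtain ⟨J, hJ, K, hK, hJK⟩ := hsp.1 γ hγ
  obtain ⟨h1, h2⟩ := solve_pair hJK ((hG γ hγ J hJ).symm.trans (h J hJ))
    ((hG γ hγ K hK).symm.trans (h K hK))
  exact Prod.ext h1 h2

lemma stem_eq_of_end {n : ℕ} {Ω : Set (Fin n → ℍ)} (hsp : stemPreserving n Ω Ω)
    {g : (Fin n → ℍ) → ℍ} {G : (ℝ → Fin n → ℂ) → ℍ × ℍ} (hG : isStemOf n Ω g G)
    {α β : ℝ → Fin n → ℂ} (hα : α ∈ PathsIn n Ω) (hβ : β ∈ PathsIn n Ω) (hαβ : α 1 = β 1)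
    {I : ℍ} (hIα : I ∈ sliceUnits n Ω α) (hIβ : I ∈ sliceUnits n Ω β) : G α = G β := by
  have hex : ∃ J ∈ sliceUnits n Ω α ∩ sliceUnits n Ω β, J ≠ I := by
    by_contra! hcon
    exact hsp.2 α hα β hβ hαβ ⟨I, Set.eq_singleton_iff_unique_mem.2 ⟨⟨hIα, hIβ⟩, hcon⟩⟩
  obtain ⟨J, ⟨hJα, hJβ⟩, hJI⟩ := hex
  have e1 := hG α hα J hJα
  have e2 := hG α hα I hIα
  rw [hαβ] at e1 e2
  obtain ⟨h1, h2⟩ := solve_pair hJI (e1.symm.trans (hG β hβ J hJβ))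
    (e2.symm.trans (hG β hβ I hIβ))
  exact Prod.ext h1 h2

lemma stem_conj {n : ℕ} {Ω : Set (Fin n → ℍ)} (hsp : stemPreserving n Ω Ω)
    {g : (Fin n → ℍ) → ℍ} {G : (ℝ → Fin n → ℂ) → ℍ × ℍ} (hG : isStemOf n Ω g G)
    {γ : ℝ → Fin n → ℂ} (hγ : γ ∈ PathsIn n Ω) :
    G (conjPath n γ) = ((G γ).1, -(G γ).2) := by
  refine stem_unique hsp hG (conj_mem_PathsIn hγ) fun I hI => ?_
  have h1 := neg_mem_sliceUnits hI
  rw [conjPath_conjPath] at h1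
  have h2 := hG γ hγ _ h1
  have h3 := PsiI_neg_conj (n := n) (-I) γ 1
  rw [neg_neg] at h3
  rw [h3, h2]; simp

lemma stemF_isStem {n : ℕ} {Ω : Set (Fin n → ℍ)} {g : (Fin n → ℍ) → ℍ}
    (h : ∃ G, isStemOf n Ω g G) : isStemOf n Ω g (stemF n Ω g) := by
  unfold stemF
  rw [dif_pos h]
  exact h.choose_spec

lemma scrF_eq {n : ℕ} {Ω : Set (Fin n → ℍ)} (hsp : stemPreserving n Ω Ω)
    {g : (Fin n → ℍ) → ℍ} {G : (ℝ → Fin n → ℂ) → ℍ × ℍ} (hG : isStemOf n Ω g G)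
    {δ : ℝ → Fin n → ℂ} (hδ : δ ∈ PathsIn n Ω) {J : ℍ} (hJ : J ∈ sliceUnits n Ω δ)
    {q : Fin n → ℍ} (hq : PsiI n J (δ 1) = q) (hs : scrI q = J)
    (hne : ∃ ℓ, Quaternion.im (q ℓ) ≠ 0) : scrF n Ω Ω g q = G δ := by
  have h : (∃ ℓ, Quaternion.im (q ℓ) ≠ 0) ∧
      ∃ γ, γ ∈ PathsIn n Ω ∧ pathInSlice n Ω (scrI q) γ ∧ PsiI n (scrI q) (γ 1) = q :=
    ⟨hne, δ, hδ, by rw [hs]; exact hJ.2, by rw [hs]; exact hq⟩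
  unfold scrF
  rw [dif_pos h]
  obtain ⟨hβ, hβs, hβe⟩ := h.2.choose_spec
  generalize h.2.choose = β at hβ hβs hβe
  rw [hs] at hβs hβe
  have hend : β 1 = δ 1 := PsiI_injective hJ.1 (hβe.trans hq.symm)
  have hstem := stemF_isStem ⟨G, hG⟩
  rw [stem_eq_of_end hsp hstem hβ hδ hend ⟨hJ.1, hβs⟩ hJ]
  exact stem_unique hsp hstem hδ (hG δ hδ)

/-- The main formula: `(f*g)(γ^I(1)) = f(γ^I(1)) G₁(γ) + I f(γ^I(1)) G₂(γ)`. -/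
lemma star_path {n : ℕ} {Ω : Set (Fin n → ℍ)} (hsp : stemPreserving n Ω Ω)
    (f : (Fin n → ℍ) → ℍ) {g : (Fin n → ℍ) → ℍ} {G : (ℝ → Fin n → ℂ) → ℍ × ℍ}
    (hG : isStemOf n Ω g G) {γ : ℝ → Fin n → ℂ} (hγ : γ ∈ PathsIn n Ω) {I : ℍ}
    (hI : I ∈ sliceUnits n Ω γ) :
    starProd n Ω Ω f g (PsiI n I (γ 1))
      = f (PsiI n I (γ 1)) * (G γ).1 + I * f (PsiI n I (γ 1)) * (G γ).2 := by
  unfold starProd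
  by_cases hne : ∃ ℓ, Quaternion.im (PsiI n I (γ 1) ℓ) ≠ 0
  · rcases scrI_PsiI hI.1 (γ 1) hne with hs | hs
    · rw [scrF_eq hsp hG hγ hI rfl hs hne, hs]
    · rw [scrF_eq hsp hG (conj_mem_PathsIn hγ) (neg_mem_sliceUnits hI) (PsiI_neg_conj I γ 1)
        hs hne, hs, stem_conj hsp hG hγ]
      simp
  · have hr : ∀ ℓ, (γ 1 ℓ).im = 0 := by
      intro ℓ
      by_contra h
      exact hne ⟨ℓ, by rw [PsiI_im hI.1]; exact smul_ne_zero h (QS_ne_zero hI.1)⟩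
    have h1 : scrF n Ω Ω g (PsiI n I (γ 1)) = (g (PsiI n I (γ 1)), 0) := by
      unfold scrF
      rw [dif_neg fun h => hne h.1]
    have h2 : G γ = (g (PsiI n I (γ 1)), 0) := by
      refine stem_unique hsp hG hγ fun J _ => ?_
      rw [PsiI_real hr J I]; simp
    rw [h1, h2]; simp

lemma star_stem {n : ℕ} {Ω : Set (Fin n → ℍ)} (hsp : stemPreserving n Ω Ω)
    {f g : (Fin n → ℍ) → ℍ} {F G : (ℝ → Fin n → ℂ) → ℍ × ℍ}
    (hF : isStemOf n Ω f F) (hG : isStemOf n Ω g G) :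
    isStemOf n Ω (starProd n Ω Ω f g) (fun γ =>
      ((F γ).1 * (G γ).1 - (F γ).2 * (G γ).2, (F γ).1 * (G γ).2 + (F γ).2 * (G γ).1)) := by
  intro γ hγ I hI
  rw [star_path hsp f hG hγ hI, hF γ hγ I hI]
  have e : I * ((F γ).1 + I * (F γ).2) = I * (F γ).1 - (F γ).2 := by
    rw [mul_add, ← mul_assoc, QS_mul_self hI.1]; noncomm_ring
  rw [e]
  noncomm_ring

lemma path_to {n : ℕ} {Ω : Set (Fin n → ℍ)} (hrc : realPathConnected n Ω) {I : ℍ} (hI : I ∈ QS)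
    {z : Fin n → ℂ} (hz : PsiI n I z ∈ Ω) :
    ∃ γ ∈ PathsIn n Ω, I ∈ sliceUnits n Ω γ ∧ γ 1 = z := by
  by_cases hne : ∃ ℓ, Quaternion.im (PsiI n I z ℓ) ≠ 0
  · obtain ⟨γ, hγ, J, hJ, he⟩ := hrc _ hz
    have hne' := hne
    rw [← he] at hne'
    have h1 := scrI_PsiI hI z hne
    have h2 := scrI_PsiI hJ.1 (γ 1) hne'
    rw [he] at h2
    have h3 : J = I ∨ J = -I := by
      rcases h1 with h1 | h1 <;> rcases h2 with h2 | h2 <;> rw [h1] at h2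
      · exact Or.inl h2.symm
      · right; rw [h2, neg_neg]
      · exact Or.inr h2.symm
      · left; exact (neg_injective h2).symm
    rcases h3 with rfl | rfl
    · exact ⟨γ, hγ, hJ, PsiI_injective hI he⟩
    · have h4 := neg_mem_sliceUnits hJ
      rw [neg_neg] at h4
      refine ⟨conjPath n γ, conj_mem_PathsIn hγ, h4, PsiI_injective hI ?_⟩
      rw [← he]
      have := PsiI_neg_conj (n := n) (-I) γ 1
      rwa [neg_neg] at this
  · have hr : ∀ ℓ, (z ℓ).im = 0 := by
      intro ℓ
      by_contra h
      exact hne ⟨ℓ, by rw [PsiI_im hI]; exact smul_ne_zero h (QS_ne_zero hI)⟩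
    have hm : I ∈ sliceUnits n Ω (fun _ => z) := ⟨hI, fun _ _ => hz⟩
    exact ⟨fun _ => z, ⟨⟨continuousOn_const, hr⟩, I, hm⟩, hm, rfl⟩

lemma star_regular {n : ℕ} {Ω : Set (Fin n → ℍ)} (hΩ : sliceOpen n Ω)
    (hrc : realPathConnected n Ω) (hsp : stemPreserving n Ω Ω) {f g : (Fin n → ℍ) → ℍ}
    (hf : SliceRegular n Ω f) (hg : SliceRegular n Ω g) :
    SliceRegular n Ω (starProd n Ω Ω f g) := by
  obtain ⟨G, hG⟩ := regular_pathSlice hΩ hsp hg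
  refine SliceRegular.of_cr hΩ fun I hI z hz => ?_
  obtain ⟨γ, hγ, hIγ, rfl⟩ := path_to hrc hI hz
  obtain ⟨J, hJ, hJI⟩ := (hsp.1 γ hγ).exists_ne I
  have h11 : (1 : ℝ) ∈ Set.Icc (0 : ℝ) 1 := by simp
  have hzJ : PsiI n J (γ 1) ∈ Ω := hJ.2 1 h11
  obtain ⟨r, hr, hball⟩ := Metric.isOpen_iff.1 ((hΩ.2 I hI).inter (hΩ.2 J hJ.1)) _ ⟨hz, hzJ⟩
  obtain ⟨L, hL, hCR⟩ := hf.cr hΩ hI hz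
  obtain ⟨L1, L2, h1, h2, hCR2⟩ := stem_pair_deriv hΩ hg hI hJ.1 hJI.symm hz hzJ
  have heq : (fun w => starProd n Ω Ω f g (PsiI n I w)) =ᶠ[nhds (γ 1)]
      ((fun w => f (PsiI n I w)) * stemOne n g I J
        + (fun w => I * f (PsiI n I w)) * stemTwo n g I J) := by
    refine Filter.eventually_of_mem (Metric.ball_mem_nhds _ hr) fun w hw => ?_
    have hIw := extPath_mem hIγ (fun x hx => (hball hx).1) hw
    have hJw := extPath_mem hJ (fun x hx => (hball hx).2) hw
    have hp : extPath n γ w ∈ PathsIn n Ω := ⟨extPath_mem_PathsC hγ.1 w, I, hIw⟩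
    have hGw : G (extPath n γ w) = (stemOne n g I J w, stemTwo n g I J w) := by
      refine stem_unique hsp hG hp fun K hK => ?_
      have := regular_formula hΩ hg hp.1 hK hIw hJw hJI.symm
      rwa [extPath_one] at this ⊢
    have := star_path hsp f hG hp hIw
    rw [extPath_one, hGw] at this
    exact this
  refine ⟨_, ((hL.mul' h1).add ((hL.const_mul I).mul' h2)).congr_of_eventuallyEq heq,
    fun v => ?_⟩
  have e0 := hCR v
  obtain ⟨e1, e2⟩ := hCR2 v
  have hII := QS_mul_self hI
  generalize stemOne n g I J (γ 1) = g1
  generalize stemTwo n g I J (γ 1) = g2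
  show f (PsiI n I (γ 1)) * L1 v + L v * g1
      + (I * f (PsiI n I (γ 1)) * L2 v + I * L v * g2)
    + I * (f (PsiI n I (γ 1)) * L1 (Complex.I • v) + L (Complex.I • v) * g1
      + (I * f (PsiI n I (γ 1)) * L2 (Complex.I • v) + I * L (Complex.I • v) * g2)) = 0
  generalize f (PsiI n I (γ 1)) = φ
  calc _ = (L v + I * L (Complex.I • v)) * g1 + I * (L v + I * L (Complex.I • v)) * g2
        + I * φ * (L2 v + L1 (Complex.I • v))
        + (φ * L1 v + (I * I) * φ * L2 (Complex.I • v)) := by noncomm_ring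
    _ = φ * (L1 v - L2 (Complex.I • v)) := by
      rw [e0, e2, hII]; noncomm_ring
    _ = 0 := by rw [e1, mul_zero]

theorem statement8 (n : ℕ) (hn : 1 ≤ n) (Ω : Set (Fin n → ℍ)) (hΩ : sliceOpen n Ω)
    (hrc : realPathConnected n Ω) (hsp : stemPreserving n Ω Ω)
    (f g h : (Fin n → ℍ) → ℍ)
    (hf : SliceRegular n Ω f) (hg : SliceRegular n Ω g) (hh : SliceRegular n Ω h)
    (a : ℝ) :
    SliceRegular n Ω (fun q => f q + g q) ∧
    SliceRegular n Ω (starProd n Ω Ω f g) ∧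
    (∀ q ∈ Ω, starProd n Ω Ω (starProd n Ω Ω f g) h q
        = starProd n Ω Ω f (starProd n Ω Ω g h) q) ∧
    (∀ q ∈ Ω, starProd n Ω Ω (fun _ => 1) f q = f q) ∧
    (∀ q ∈ Ω, starProd n Ω Ω f (fun _ => 1) q = f q) ∧
    (∀ q ∈ Ω, starProd n Ω Ω f (fun p => g p + h p) q
        = starProd n Ω Ω f g q + starProd n Ω Ω f h q) ∧
    (∀ q ∈ Ω, starProd n Ω Ω (fun p => f p + g p) h q
        = starProd n Ω Ω f h q + starProd n Ω Ω g h q) ∧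
    (∀ q ∈ Ω, starProd n Ω Ω (fun p => a • f p) g q = a • starProd n Ω Ω f g q) ∧
    (∀ q ∈ Ω, starProd n Ω Ω f (fun p => a • g p) q = a • starProd n Ω Ω f g q) := by
  obtain ⟨F, hF⟩ := regular_pathSlice hΩ hsp hf
  obtain ⟨G, hG⟩ := regular_pathSlice hΩ hsp hg
  obtain ⟨H, hH⟩ := regular_pathSlice hΩ hsp hh
  have hone : isStemOf n Ω (fun _ => (1 : ℍ)) (fun _ => (1, 0)) := by
    intro γ _ I _; simp
  have hGH : isStemOf n Ω (fun p => g p + h p)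
      (fun γ => ((G γ).1 + (H γ).1, (G γ).2 + (H γ).2)) := by
    intro γ hγ I hI
    simp only [hG γ hγ I hI, hH γ hγ I hI]; noncomm_ring
  have haG : isStemOf n Ω (fun p => a • g p) (fun γ => (a • (G γ).1, a • (G γ).2)) := by
    intro γ hγ I hI
    simp only [hG γ hγ I hI, smul_add, mul_smul_comm]
  refine ⟨?_, star_regular hΩ hrc hsp hf hg, ?_, ?_, ?_, ?_, ?_, ?_, ?_⟩
  · refine SliceRegular.of_cr hΩ fun I hI z hz => ?_
    obtain ⟨L, hL, hCR⟩ := hf.cr hΩ hI hz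
    obtain ⟨M, hM, hCRM⟩ := hg.cr hΩ hI hz
    refine ⟨L + M, hL.add hM, fun v => ?_⟩
    show L v + M v + I * (L (Complex.I • v) + M (Complex.I • v)) = 0
    calc _ = (L v + I * L (Complex.I • v)) + (M v + I * M (Complex.I • v)) := by noncomm_ring
      _ = 0 := by rw [hCR, hCRM, add_zero]
  all_goals
    intro q hq
    obtain ⟨γ, hγ, I, hI, rfl⟩ := hrc q hq
  · rw [star_path hsp _ hH hγ hI, star_path hsp _ hG hγ hI,
      star_path hsp _ (star_stem hsp hG hH) hγ hI]
    generalize f (PsiI n I (γ 1)) = φ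
    calc _ = φ * (G γ).1 * (H γ).1 + I * φ * (G γ).2 * (H γ).1 + I * φ * (G γ).1 * (H γ).2
          + (I * I) * φ * (G γ).2 * (H γ).2 := by noncomm_ring
      _ = _ := by rw [QS_mul_self hI.1]; noncomm_ring
  · rw [star_path hsp _ hF hγ hI, hF γ hγ I hI]; simp
  · rw [star_path hsp _ hone hγ hI]; simp
  · rw [star_path hsp _ hGH hγ hI, star_path hsp _ hG hγ hI, star_path hsp _ hH hγ hI]
    noncomm_ring
  · rw [star_path hsp _ hH hγ hI, star_path hsp _ hH hγ hI, star_path hsp _ hH hγ hI]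
    noncomm_ring
  · rw [star_path hsp _ hG hγ hI, star_path hsp _ hG hγ hI]
    simp only [smul_add, mul_smul_comm, smul_mul_assoc]
  · rw [star_path hsp _ haG hγ hI, star_path hsp _ hG hγ hI]
    simp only [smul_add, mul_smul_comm]
end

section
/- Fix an integer n ≥ 1. Let Ω₁ ⊆ ℍ_s^n be real-path-connected, let Ω₂ ⊆ ℍ_s^n be Ω₁-stem-preserving, and let f : Ω₂ → ℍ be path-slice. Then for any two stem functions G and G' of f, the restrictions of G and G' to 𝒫(ℂ^n, Ω₁) coincide: G(γ) = G'(γ) for every γ ∈ 𝒫(ℂ^n, Ω₁). -/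
open scoped ENNReal NNReal

theorem statement11 (n : ℕ) (hn : 1 ≤ n) (Ω₁ Ω₂ : Set (Fin n → ℍ))
    (hΩ₁ : Ω₁ ⊆ weakSliceCone n) (hΩ₂ : Ω₂ ⊆ weakSliceCone n)
    (hrc : realPathConnected n Ω₁) (hsp : stemPreserving n Ω₁ Ω₂)
    (f : (Fin n → ℍ) → ℍ) (G G' : (ℝ → Fin n → ℂ) → ℍ × ℍ)
    (hG : isStemOf n Ω₂ f G) (hG' : isStemOf n Ω₂ f G')
    (γ : ℝ → Fin n → ℂ) (hγ : γ ∈ PathsIn n Ω₁) :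
    G γ = G' γ := by
  obtain ⟨I, hI, J, hJ, hIJ⟩ := hsp.1 γ hγ
  have hγ2 : γ ∈ PathsIn n Ω₂ := ⟨hγ.1, I, hI⟩
  have h1 := (hG γ hγ2 I hI).symm.trans (hG' γ hγ2 I hI)
  have h2 := (hG γ hγ2 J hJ).symm.trans (hG' γ hγ2 J hJ)
  have h3 : (I - J) * ((G γ).2 - (G' γ).2) = 0 := by
    have e : (I - J) * ((G γ).2 - (G' γ).2) =
        (((G γ).1 + I * (G γ).2) - ((G' γ).1 + I * (G' γ).2)) -
        (((G γ).1 + J * (G γ).2) - ((G' γ).1 + J * (G' γ).2)) := by noncomm_ring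
    rw [e, h1, h2, sub_self, sub_self, sub_self]
  have h4 : (G γ).2 = (G' γ).2 := by
    rcases mul_eq_zero.mp h3 with h | h
    · exact absurd (sub_eq_zero.mp h) hIJ
    · exact sub_eq_zero.mp h
  rw [h4] at h1
  exact Prod.ext (add_right_cancel h1) h4
end

section
/- Fix an integer n ≥ 1. Let Ω₁ ⊆ ℍ_s^n be real-path-connected, let Ω₂ ⊆ ℍ_s^n be Ω₁-stem-preserving, and let f : Ω₂ → ℍ be path-slice. Let q ∈ Ω₁ with q ∉ ℝ^n, and let γ, δ ∈ 𝒫(ℂ^n, Ω₁) be paths such that γ^{ℑ(q)}([0,1]) ⊆ Ω₁, δ^{ℑ(q)}([0,1]) ⊆ Ω₁ and γ^{ℑ(q)}(1) = δ^{ℑ(q)}(1) = q. Then F_{Ω₁}^f(γ) = F_{Ω₁}^f(δ); in other words, the map ℱ_{Ω₁}^f : Ω₁ → ℍ^{2×1} is well defined. -/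
open scoped ENNReal NNReal

theorem scrI_mem_aux {n : ℕ} (q : Fin n → ℍ) (hqR : ∃ ℓ, Quaternion.im (q ℓ) ≠ 0) :
    scrI q ∈ QS ∧ (scrI q).re = 0 := by
  classical
  have h : (Finset.univ.filter fun ℓ : Fin n => Quaternion.im (q ℓ) ≠ 0).Nonempty := by
    obtain ⟨ℓ, hℓ⟩ := hqR
    exact ⟨ℓ, by simp [hℓ]⟩
  have hm := Finset.min'_mem _ h
  have key : ∀ p : ℍ, Quaternion.im p ≠ 0 →
      (‖Quaternion.im p‖⁻¹ • Quaternion.im p) ∈ QS ∧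
        (‖Quaternion.im p‖⁻¹ • Quaternion.im p).re = 0 := by
    intro p hp
    have hn : ‖Quaternion.im p‖ ≠ 0 := norm_ne_zero_iff.mpr hp
    refine ⟨?_, by simp⟩
    have h1 : (Quaternion.im p) ^ 2 = -((Quaternion.normSq (Quaternion.im p) : ℝ) : ℍ) := by
      rw [Quaternion.sq_eq_neg_normSq]
      simp
    show (‖Quaternion.im p‖⁻¹ • Quaternion.im p) ^ 2 = -1
    rw [smul_pow, h1, Quaternion.normSq_eq_norm_mul_self, smul_neg, ← Quaternion.coe_smul]
    congr 1
    rw [smul_eq_mul, show (‖Quaternion.im p‖⁻¹ ^ 2 * (‖Quaternion.im p‖ * ‖Quaternion.im p‖)) = 1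
      by field_simp]
    simp
  unfold scrI
  have hm' := (Finset.mem_filter.mp hm).2
  have := key _ hm'
  rw [dif_pos (by convert h)]
  convert this

theorem PsiI_inj_aux {n : ℕ} {I : ℍ} (hI : I ∈ QS) (hre : I.re = 0) {z w : Fin n → ℂ}
    (h : PsiI n I z = PsiI n I w) : z = w := by
  have hI0 : I ≠ 0 := by
    rintro rfl
    have h0 : (0 : ℍ) ^ 2 = -1 := hI
    simp at h0
  funext ℓ
  have h1 : algebraMap ℝ ℍ (z ℓ).re + (z ℓ).im • I = algebraMap ℝ ℍ (w ℓ).re + (w ℓ).im • I :=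
    congrFun h ℓ
  have h2 : (z ℓ).re = (w ℓ).re := by
    have := congrArg QuaternionAlgebra.re h1
    simpa [hre] using this
  rw [h2] at h1
  have h3 := smul_left_injective ℝ hI0 (add_left_cancel h1)
  exact Complex.ext h2 h3

theorem concat_cont_aux {n : ℕ} {γ δ : ℝ → Fin n → ℂ}
    (hγ : ContinuousOn γ (Set.Icc 0 1)) (hδ : ContinuousOn δ (Set.Icc 0 1))
    (h : γ 1 = δ 0) : ContinuousOn (concatP n γ δ) (Set.Icc 0 1) := by
  have e : Set.Icc (0 : ℝ) 1 = Set.Icc 0 (1 / 2) ∪ Set.Icc (1 / 2) 1 :=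
    (Set.Icc_union_Icc_eq_Icc (by norm_num) (by norm_num)).symm
  rw [e]
  refine ContinuousOn.union_of_isClosed ?_ ?_ isClosed_Icc isClosed_Icc
  · have : ContinuousOn (fun t : ℝ => γ (2 * t)) (Set.Icc 0 (1 / 2)) :=
      hγ.comp (by fun_prop) (fun t ht => ⟨by linarith [ht.1], by linarith [ht.2]⟩)
    refine this.congr (fun t ht => ?_)
    simp only [concatP]
    rw [if_pos ht.2]
  · have : ContinuousOn (fun t : ℝ => δ (2 * t - 1)) (Set.Icc (1 / 2) 1) :=
      hδ.comp (by fun_prop) (fun t ht => ⟨by linarith [ht.1], by linarith [ht.2]⟩)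
    refine this.congr (fun t ht => ?_)
    simp only [concatP]
    split_ifs with h'
    · have : t = 1 / 2 := le_antisymm h' ht.1
      subst this
      norm_num [h]
    · rfl

theorem concat_slice_aux {n : ℕ} {Ω : Set (Fin n → ℍ)} {I : ℍ} {γ δ : ℝ → Fin n → ℂ}
    (h : γ 1 = δ 1) :
    pathInSlice n Ω I (concatP n γ (fun t => δ (1 - t))) ↔
      pathInSlice n Ω I γ ∧ pathInSlice n Ω I δ := by
  constructor
  · intro H
    refine ⟨fun t ht => ?_, fun t ht => ?_⟩
    · have := H (t / 2) ⟨by linarith [ht.1], by linarith [ht.2]⟩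
      simp only [concatP] at this
      rw [if_pos (by linarith [ht.2])] at this
      rwa [show 2 * (t / 2) = t by ring] at this
    · have := H (1 - t / 2) ⟨by linarith [ht.2], by linarith [ht.1]⟩
      simp only [concatP] at this
      split_ifs at this with h'
      · have : t = 1 := by linarith [ht.2]
        subst this
        norm_num at *
        rwa [← h]
      · rwa [show 1 - (2 * (1 - t / 2) - 1) = t by ring] at this
  · rintro ⟨H1, H2⟩ t ht
    simp only [concatP]
    split_ifs with h'
    · exact H1 _ ⟨by linarith [ht.1], by linarith⟩
    · exact H2 _ ⟨by linarith [ht.2], by linarith⟩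

theorem statement12 (n : ℕ) (hn : 1 ≤ n) (Ω₁ Ω₂ : Set (Fin n → ℍ))
    (hΩ₁ : Ω₁ ⊆ weakSliceCone n) (hΩ₂ : Ω₂ ⊆ weakSliceCone n)
    (hrc : realPathConnected n Ω₁) (hsp : stemPreserving n Ω₁ Ω₂)
    (f : (Fin n → ℍ) → ℍ) (hf : PathSliceFn n Ω₂ f)
    (q : Fin n → ℍ) (hq : q ∈ Ω₁) (hqR : ∃ ℓ, Quaternion.im (q ℓ) ≠ 0)
    (γ δ : ℝ → Fin n → ℂ) (hγ : γ ∈ PathsIn n Ω₁) (hδ : δ ∈ PathsIn n Ω₁)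
    (hγs : pathInSlice n Ω₁ (scrI q) γ) (hδs : pathInSlice n Ω₁ (scrI q) δ)
    (hγe : PsiI n (scrI q) (γ 1) = q) (hδe : PsiI n (scrI q) (δ 1) = q) :
    stemF n Ω₂ f γ = stemF n Ω₂ f δ := by
  obtain ⟨hI, hre⟩ := scrI_mem_aux q hqR
  have h1 : γ 1 = δ 1 := PsiI_inj_aux hI hre (hγe.trans hδe.symm)
  have hα : concatP n γ (fun t => δ (1 - t)) ∈ PathsIn n Ω₁ := by
    refine ⟨⟨concat_cont_aux hγ.1.1 ?_ (by simpa using h1), ?_⟩, scrI q, hI,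
      (concat_slice_aux h1).mpr ⟨hγs, hδs⟩⟩
    · exact hδ.1.1.comp (by fun_prop) (fun t ht => ⟨by linarith [ht.2], by linarith [ht.1]⟩)
    · intro ℓ
      have := hγ.1.2 ℓ
      simpa [concatP] using this
  obtain ⟨I, hI2, J, hJ2, hIJ⟩ := hsp.1 _ hα
  have hIs := (concat_slice_aux h1).mp hI2.2
  have hJs := (concat_slice_aux h1).mp hJ2.2
  have hst : isStemOf n Ω₂ f (stemF n Ω₂ f) := by
    have hf' : ∃ F, isStemOf n Ω₂ f F := hf
    unfold stemF
    rw [dif_pos hf']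
    exact hf'.choose_spec
  have a1 := hst γ ⟨hγ.1, I, hI2.1, hIs.1⟩ I ⟨hI2.1, hIs.1⟩
  have a2 := hst γ ⟨hγ.1, I, hI2.1, hIs.1⟩ J ⟨hJ2.1, hJs.1⟩
  have b1 := hst δ ⟨hδ.1, I, hI2.1, hIs.2⟩ I ⟨hI2.1, hIs.2⟩
  have b2 := hst δ ⟨hδ.1, I, hI2.1, hIs.2⟩ J ⟨hJ2.1, hJs.2⟩
  rw [h1] at a1 a2
  have e1 := a1.symm.trans b1
  have e2 := a2.symm.trans b2
  have hprod : (I - J) * ((stemF n Ω₂ f γ).2 - (stemF n Ω₂ f δ).2) = 0 := by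
    rw [sub_mul, mul_sub, mul_sub]
    have e3 := congrArg₂ (· - ·) e1 e2
    simp only [add_sub_add_left_eq_sub] at e3
    rw [sub_sub_sub_comm, e3, sub_self]
  have hs : (stemF n Ω₂ f γ).2 = (stemF n Ω₂ f δ).2 := by
    rcases mul_eq_zero.mp hprod with h | h
    · exact absurd (sub_eq_zero.mp h) hIJ
    · exact sub_eq_zero.mp h
  rw [hs] at e1
  exact Prod.ext (add_right_cancel e1) hs
end

section
/- Fix an integer n ≥ 1. Let Ω ∈ τ_s(ℍ_s^n) and let f ∈ 𝒮ℛ(Ω) be a weakly slice regular function. Then f is path-slice: there exists F : 𝒫(ℂ^n, Ω) → ℍ^{2×1} such that f(γ^I(1)) = (1, I)·F(γ) for every γ ∈ 𝒫(ℂ^n, Ω) and every I ∈ 𝕊(Ω, γ). -/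
open scoped ENNReal NNReal

open Set Filter Topology in
lemma holo_line {n : ℕ} {p : Fin n → ℂ} {r : ℝ} {φ : (Fin n → ℂ) → ℂ}
    (hφ : DifferentiableOn ℂ φ (Metric.ball p r)) (q v : Fin n → ℂ) (t : ℂ)
    (hq : q ∈ Metric.ball p r) (hw : q + t • v ∈ Metric.ball p r)
    (h0 : ∃ᶠ s in 𝓝[≠] (0 : ℂ), φ (q + s • v) = 0) : φ (q + t • v) = 0 := by
  let L : ℂ → (Fin n → ℂ) := fun s => q + s • v
  have hLd : Differentiable ℂ L := by
    intro s
    exact (differentiableAt_id.smul_const v).const_add q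
  have hLc : Continuous L := hLd.continuous
  let V : Set ℂ := L ⁻¹' Metric.ball p r
  have hVo : IsOpen V := Metric.isOpen_ball.preimage hLc
  have hVc : Convex ℝ V := by
    intro a ha b hb x y hx hy hxy
    have : L (x • a + y • b) = x • L a + y • L b := by
      have hq' : q = x • q + y • q := by rw [← add_smul, hxy, one_smul]
      simp only [L]
      conv_lhs => rw [hq']
      ext i
      simp
      ring
    show L _ ∈ Metric.ball p r
    rw [this]
    exact convex_ball p r ha hb hx hy hxy
  have han : AnalyticOnNhd ℂ (φ ∘ L) V :=
    (hφ.comp hLd.differentiableOn (fun _ h => h)).analyticOnNhd hVo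
  have h0V : (0 : ℂ) ∈ V := by
    show L 0 ∈ Metric.ball p r
    simpa [L] using hq
  exact han.eqOn_zero_of_preconnected_of_frequently_eq_zero hVc.isPreconnected h0V h0 hw

open Set Filter Topology in
lemma holo_path {n : ℕ} {U : Set (Fin n → ℂ)} (hU : IsOpen U) {φ : (Fin n → ℂ) → ℂ}
    (hφ : DifferentiableOn ℂ φ U) (γ : ℝ → Fin n → ℂ) (hγ : ContinuousOn γ (Icc 0 1))
    (hγU : ∀ t ∈ Icc (0 : ℝ) 1, γ t ∈ U) (hγ0 : ∀ l, (γ 0 l).im = 0)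
    (hre : ∀ z ∈ U, (∀ l, (z l).im = 0) → φ z = 0) : φ (γ 1) = 0 := by
  let Z : Set (Fin n → ℂ) := interior {z | φ z = 0}
  have hs : IsPreconnected (γ '' Icc 0 1) := isPreconnected_Icc.image γ hγ
  have hsub : γ '' Icc 0 1 ⊆ Z := by
    refine hs.subset_of_closure_inter_subset isOpen_interior ?_ ?_
    · have h00 : (0 : ℝ) ∈ Icc (0 : ℝ) 1 := by simp
      refine ⟨γ 0, ⟨0, h00, rfl⟩, ?_⟩
      obtain ⟨r, hr, hball⟩ := Metric.isOpen_iff.1 hU _ (hγU 0 h00)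
      rw [mem_interior_iff_mem_nhds]
      filter_upwards [Metric.ball_mem_nhds _ hr] with w hw
      let x : Fin n → ℂ := fun l => ((w l).re : ℂ)
      let y : Fin n → ℂ := fun l => ((w l).im : ℂ)
      have hwxy : w = x + Complex.I • y := by
        ext l
        simp only [x, y, Pi.add_apply, Pi.smul_apply, smul_eq_mul]
        rw [mul_comm, Complex.re_add_im]
      have hx : x ∈ Metric.ball (γ 0) r := by
        rw [Metric.mem_ball, dist_pi_lt_iff hr] at hw ⊢
        intro l
        refine lt_of_le_of_lt ?_ (hw l)
        have hg : γ 0 l = ((γ 0 l).re : ℂ) := by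
          apply Complex.ext <;> simp [hγ0 l]
        rw [Complex.dist_eq, Complex.dist_eq]
        have : x l - γ 0 l = (((w l - γ 0 l).re : ℝ) : ℂ) := by
          rw [hg]; simp [x]
        rw [this, Complex.norm_real]
        exact Complex.abs_re_le_norm _
      show φ w = 0
      rw [hwxy]
      refine holo_line (hφ.mono hball) x y Complex.I hx (hwxy ▸ hw) ?_
      have hev : ∀ᶠ s : ℝ in 𝓝 (0 : ℝ), φ (x + (s : ℂ) • y) = 0 := by
        have hc : Continuous (fun s : ℝ => x + (s : ℂ) • y) := by fun_prop
        have : ∀ᶠ s : ℝ in 𝓝 (0 : ℝ), x + (s : ℂ) • y ∈ U :=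
          hc.continuousAt.eventually_mem (hU.mem_nhds (by simpa using hball hx))
        filter_upwards [this] with s hs
        exact hre _ hs (by intro l; simp [x, y])
      have ht : Tendsto (fun s : ℝ => (s : ℂ)) (𝓝[≠] 0) (𝓝[≠] 0) := by
        refine tendsto_nhdsWithin_iff.2 ⟨?_, ?_⟩
        · exact (Complex.continuous_ofReal.tendsto' 0 0 (by simp)).mono_left nhdsWithin_le_nhds
        · filter_upwards [self_mem_nhdsWithin] with s hs
          simpa using hs
      exact ht.frequently (hev.filter_mono nhdsWithin_le_nhds).frequently
    · rintro p ⟨hpc, t, ht, rfl⟩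
      obtain ⟨r, hr, hball⟩ := Metric.isOpen_iff.1 hU _ (hγU t ht)
      obtain ⟨q, hq, hqZ⟩ := mem_closure_iff.1 hpc _ Metric.isOpen_ball (Metric.mem_ball_self hr)
      rw [mem_interior_iff_mem_nhds]
      filter_upwards [Metric.ball_mem_nhds _ hr] with w hw
      have hw' : w = q + (1 : ℂ) • (w - q) := by simp
      show φ w = 0
      rw [hw']
      refine holo_line (hφ.mono hball) q (w - q) 1 hq (hw' ▸ hw) ?_
      have hc : Continuous (fun s : ℂ => q + s • (w - q)) := by fun_prop
      have : ∀ᶠ s in 𝓝 (0 : ℂ), q + s • (w - q) ∈ Z :=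
        hc.continuousAt.eventually_mem (isOpen_interior.mem_nhds (by simpa using hqZ))
      refine Eventually.frequently ((this.mono ?_).filter_mono nhdsWithin_le_nhds)
      intro s hs
      exact (interior_subset hs : _ ∈ {z | φ z = 0})
  exact (interior_subset (hsub ⟨1, by simp, rfl⟩) : γ 1 ∈ {z | φ z = 0})

/-- A functional intertwining left multiplication by `K` and by `i`. -/
noncomputable def Tfun (K c : ℍ) : ℍ →ₗ[ℝ] ℂ where
  toFun q := ⟨(q * c).re, -(K * (q * c)).re⟩
  map_add' a b := by
    apply Complex.ext
    · simp [add_mul]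
    · simp only [add_mul, mul_add, Quaternion.re_add, Complex.add_im]; ring
  map_smul' a b := by
    apply Complex.ext <;> simp [-Quaternion.re_mul]

lemma Tfun_mul {K : ℍ} (hK : K * K = -1) (c q : ℍ) :
    Tfun K c (K * q) = Complex.I * Tfun K c q := by
  have h : K * (K * q * c) = -(q * c) := by
    calc K * (K * q * c) = (K * K) * (q * c) := by noncomm_ring
      _ = _ := by rw [hK]; simp
  apply Complex.ext
  · simp [Tfun, -Quaternion.re_mul, mul_assoc]
  · simp only [Tfun, LinearMap.coe_mk, AddHom.coe_mk, h]
    simp [-Quaternion.re_mul]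

lemma fderiv_I_smul {n : ℕ} {I : ℍ} (hI : I * I = -1) (A : (Fin n → ℂ) →L[ℝ] ℍ)
    (h : ∀ l, A (Pi.single l 1) + I * A (Pi.single l Complex.I) = 0) (v : Fin n → ℂ) :
    A (Complex.I • v) = I * A v := by
  have h1 : ∀ l, A (Pi.single l Complex.I) = I * A (Pi.single l 1) := by
    intro l
    rw [eq_neg_of_add_eq_zero_left (h l), mul_neg, ← mul_assoc, hI]; simp
  have hdec : ∀ (l : Fin n) (z : ℂ), (Pi.single l z : Fin n → ℂ)
      = z.re • (Pi.single l (1 : ℂ) : Fin n → ℂ) + z.im • (Pi.single l Complex.I : Fin n → ℂ) := by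
    intro l z
    ext j
    by_cases hj : j = l
    · subst hj
      simp [Complex.re_add_im]
    · simp [hj]
  have h2 : ∀ (l : Fin n) (z : ℂ), A (Pi.single l (Complex.I * z)) = I * A (Pi.single l z) := by
    intro l z
    rw [hdec l (Complex.I * z), hdec l z]
    simp only [map_add, map_smul, h1, mul_add, mul_smul_comm]
    rw [← mul_assoc, hI]
    simp
    abel
  have hv : v = ∑ l, Pi.single l (v l) := (Finset.univ_sum_single v).symm
  have hv2 : Complex.I • v = ∑ l, Pi.single l (Complex.I * v l) :=
    (Finset.univ_sum_single (Complex.I • v)).symm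
  rw [hv2]
  conv_rhs => rw [hv]
  simp only [map_sum, h2, Finset.mul_sum]

lemma quat_alg {I J K : ℍ} (hI : I * I = -1) (hJ : J * J = -1) (hK : K * K = -1) (h : I ≠ J) :
    ((I - K) * (I - J)⁻¹) * J = K * ((I - K) * (I - J)⁻¹) ∧
    ((I - K) * (I - J)⁻¹) * I - K * ((I - K) * (I - J)⁻¹) = I - K := by
  have hne : I - J ≠ 0 := sub_ne_zero.2 h
  have h1 : (I - J) * J = -(I * (I - J)) := by
    rw [sub_mul, mul_sub, hI, hJ]; abel
  have h2 : (I - J) * I = -(J * (I - J)) := by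
    rw [sub_mul, mul_sub, hI, hJ]; abel
  have h3 : (I - J)⁻¹ * J = -(I * (I - J)⁻¹) := by
    have : J = -((I - J) * I * (I - J)⁻¹) := by
      rw [h2, neg_mul, neg_neg, mul_assoc, mul_inv_cancel₀ hne, mul_one]
    calc (I - J)⁻¹ * J = (I - J)⁻¹ * (-((I - J) * I * (I - J)⁻¹)) := by rw [← this]
      _ = -(((I - J)⁻¹ * (I - J)) * I * (I - J)⁻¹) := by noncomm_ring
      _ = _ := by rw [inv_mul_cancel₀ hne, one_mul]
  have h4 : ((I - K) * (I - J)⁻¹) * J = K * ((I - K) * (I - J)⁻¹) := by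
    rw [mul_assoc, h3, mul_neg, ← mul_assoc, ← neg_mul, ← mul_assoc]
    congr 1
    rw [sub_mul, mul_sub, hI, hK]; abel
  refine ⟨h4, ?_⟩
  rw [← h4, ← mul_sub, mul_assoc, inv_mul_cancel₀ hne, mul_one]

lemma three_units {n : ℕ} {Ω : Set (Fin n → ℍ)} (hΩ : sliceOpen n Ω)
    {f : (Fin n → ℍ) → ℍ} (hf : SliceRegular n Ω f) {γ : ℝ → Fin n → ℂ} (hγ : γ ∈ PathsC n)
    {I J K : ℍ} (hI : I ∈ sliceUnits n Ω γ) (hJ : J ∈ sliceUnits n Ω γ)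
    (hK : K ∈ sliceUnits n Ω γ) (hIJ : I ≠ J) :
    f (PsiI n K (γ 1)) - f (PsiI n I (γ 1)) +
      ((I - K) * (I - J)⁻¹) * (f (PsiI n I (γ 1)) - f (PsiI n J (γ 1))) = 0 := by
  have sq : ∀ {L : ℍ}, L ∈ QS → L * L = -1 := fun {L} h => by
    have h' : L ^ 2 = -1 := h
    rwa [pow_two] at h'
  have hder : ∀ L ∈ QS, ∀ z ∈ PsiI n L ⁻¹' Ω, ∃ A : (Fin n → ℂ) →L[ℝ] ℍ,
      HasFDerivAt (fun z => f (PsiI n L z)) A z ∧ ∀ v, A (Complex.I • v) = L * A v := by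
    intro L hL z hz
    obtain ⟨hd, hcr⟩ := hf L hL
    have hn := (hΩ.2 L hL).mem_nhds hz
    refine ⟨_, ((hd z hz).hasFDerivWithinAt).hasFDerivAt hn, ?_⟩
    exact fderiv_I_smul (sq hL) _ (hcr z hz)
  obtain ⟨hM1, hM2⟩ := quat_alg (sq hI.1) (sq hJ.1) (sq hK.1) hIJ
  set M : ℍ := (I - K) * (I - J)⁻¹ with hM
  let D : (Fin n → ℂ) → ℍ := fun z =>
    f (PsiI n K z) - f (PsiI n I z) + M * (f (PsiI n I z) - f (PsiI n J z))
  let U : Set (Fin n → ℂ) := (PsiI n I ⁻¹' Ω ∩ PsiI n J ⁻¹' Ω) ∩ PsiI n K ⁻¹' Ω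
  have hU : IsOpen U := ((hΩ.2 I hI.1).inter (hΩ.2 J hJ.1)).inter (hΩ.2 K hK.1)
  have hmain : ∀ c : ℍ, Tfun K c (D (γ 1)) = 0 := by
    intro c
    let T : ℍ →L[ℝ] ℂ := LinearMap.toContinuousLinearMap (Tfun K c)
    have hT : ∀ q, T q = Tfun K c q := fun q => rfl
    have hφ : DifferentiableOn ℂ (fun z => T (D z)) U := by
      rintro z ⟨⟨hzI, hzJ⟩, hzK⟩
      obtain ⟨A, hA, hA'⟩ := hder I hI.1 z hzI
      obtain ⟨B, hB, hB'⟩ := hder J hJ.1 z hzJ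
      obtain ⟨C, hC, hC'⟩ := hder K hK.1 z hzK
      have hD : HasFDerivAt D (C - A + (ContinuousLinearMap.mul ℝ ℍ M).comp (A - B)) z :=
        (hC.sub hA).add ((ContinuousLinearMap.mul ℝ ℍ M).hasFDerivAt.comp z (hA.sub hB))
      have hTD := T.hasFDerivAt.comp z hD
      have hlin : ∀ v, (C - A + (ContinuousLinearMap.mul ℝ ℍ M).comp (A - B)) (Complex.I • v)
          = K * (C - A + (ContinuousLinearMap.mul ℝ ℍ M).comp (A - B)) v := by
        intro v
        simp only [ContinuousLinearMap.add_apply, ContinuousLinearMap.sub_apply,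
          ContinuousLinearMap.comp_apply, ContinuousLinearMap.mul_apply', hA', hB', hC']
        have e1 : M * (I * A v - J * B v) = (M * I) * A v - (M * J) * B v := by noncomm_ring
        have e2 : M * I = I - K + K * M := by rw [← hM2]; abel
        rw [e1, e2, hM1]
        noncomm_ring
      set E := C - A + (ContinuousLinearMap.mul ℝ ℍ M).comp (A - B) with hE
      let G0 : (Fin n → ℂ) →ₗ[ℂ] ℂ :=
        { toFun := fun v => T (E v)
          map_add' := fun a b => by simp
          map_smul' := fun s v => by
            have hs : s • v = s.re • v + s.im • (Complex.I • v) := by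
              ext l
              simp only [Pi.smul_apply, Pi.add_apply, smul_eq_mul, Complex.real_smul]
              conv_lhs => rw [← Complex.re_add_im s]
              ring
            rw [hs]
            simp only [map_add, map_smul, hlin, hT, Tfun_mul (sq hK.1), RingHom.id_apply,
              smul_eq_mul, Complex.real_smul]
            conv_rhs => rw [← Complex.re_add_im s]
            ring }
      let G : (Fin n → ℂ) →L[ℂ] ℂ := LinearMap.toContinuousLinearMap G0
      have : HasFDerivAt (𝕜 := ℂ) (fun z => T (D z)) G z :=
        hasFDerivAt_of_restrictScalars ℝ hTD (by ext v; rfl)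
      exact this.differentiableAt.differentiableWithinAt
    refine holo_path hU hφ γ hγ.1 (fun t ht => ⟨⟨hI.2 t ht, hJ.2 t ht⟩, hK.2 t ht⟩) hγ.2 ?_
    intro z _ hz
    have hP : ∀ L L' : ℍ, PsiI n L z = PsiI n L' z := by
      intro L L'
      ext1 l
      simp [PsiI, hz l]
    have hD0 : D z = 0 := by
      simp only [D, hP K I, hP J I, sub_self, mul_zero, add_zero]
    simp only [hD0, map_zero]
  show D (γ 1) = 0
  have h := congrArg Complex.re (hmain (star (D (γ 1))))
  simp only [Tfun, LinearMap.coe_mk, AddHom.coe_mk, Complex.zero_re] at h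
  rw [Quaternion.self_mul_star, Quaternion.re_coe] at h
  exact Quaternion.normSq_eq_zero.1 h

theorem statement14 (n : ℕ) (hn : 1 ≤ n) (Ω : Set (Fin n → ℍ)) (hΩ : sliceOpen n Ω)
    (f : (Fin n → ℍ) → ℍ) (hf : SliceRegular n Ω f) :
    PathSliceFn n Ω f := by
  have key : ∀ γ : ℝ → Fin n → ℂ, ∃ p : ℍ × ℍ, γ ∈ PathsIn n Ω → ∀ I ∈ sliceUnits n Ω γ,
      f (PsiI n I (γ 1)) = p.1 + I * p.2 := by
    intro γ
    by_cases hγ : γ ∈ PathsIn n Ω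
    swap
    · exact ⟨0, fun h => absurd h hγ⟩
    obtain ⟨hγc, I, hI⟩ := hγ
    by_cases hJ : ∃ J ∈ sliceUnits n Ω γ, I ≠ J
    · obtain ⟨J, hJ, hIJ⟩ := hJ
      let b : ℍ := (I - J)⁻¹ * (f (PsiI n I (γ 1)) - f (PsiI n J (γ 1)))
      refine ⟨(f (PsiI n I (γ 1)) - I * b, b), fun _ K hK => ?_⟩
      have h := three_units hΩ hf hγc hI hJ hK hIJ
      rw [mul_assoc] at h
      change _ + (I - K) * b = 0 at h
      rw [← sub_eq_zero, ← h]
      noncomm_ring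
    · push Not at hJ
      refine ⟨(f (PsiI n I (γ 1)), 0), fun _ K hK => ?_⟩
      rw [← hJ K hK]
      simp
  choose F hF using key
  exact ⟨F, hF⟩
end
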